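/- arXiv:2207.14609 — 3 statements merged into one kernel-verified Lean document; each statement's English description precedes it below -/
import Mathlib

section
/- Let n₁ ≥ 1, n₂ ≥ 2, and let f₃ ∈ Y_{n₁,n₂} with a_k^(1) ≠ 0 for all k = 1, …, n₁ and with the points −b_k^(1)/a_k^(1) pairwise distinct. Then f₃ can be represented for all t ∈ ℝ as f₃(t) = q₁·t + q₀ + Σ_{ℓ=1}^{n₁} α_ℓ·σ(t − x_ℓ) + Σ_{j=1}^{n₂} Σ_{ν=0}^{n₁} α_{j,ν}·σ(t − x_{j,ν}), where x₁ < x₂ < … < x_{n₁} is the increasing rearrangement of the points −b_k^(1)/a_k^(1), the α_ℓ, α_{j,ν}, x_{j,ν} are real numbers, and (with the convention x₀ := −∞ and x_{n₁+1} := +∞) every breakpoint x_{j,ν} with α_{j,ν} ≠ 0 satisfies x_{j,ν} ∈ (x_ν, x_{ν+1}). -/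
/-- The ReLU function `σ(x) = max(x,0)`. -/
noncomputable def relu (x : ℝ) : ℝ := max x 0

/-!
A first-layer unit is an affine function plus a multiple of `σ(t - x)`, where `x` is the zero of its
argument. Hence the argument of every second-layer unit is affine between consecutive first-layer
knots, and applying `σ` to it creates at most one new knot in each gap. The new knots are collected
by induction on the number of first-layer knots: on the left of the last knot `y` the induction
hypothesis applies, on `[y, ∞)` the unit is `σ` of an affine function, and the two descriptions are
glued by a multiple of `σ(t - y)`.
-/

section Relu

lemma relu_of_nonneg {u : ℝ} (hu : 0 ≤ u) : relu u = u := max_eq_left hu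

lemma relu_of_nonpos {u : ℝ} (hu : u ≤ 0) : relu u = 0 := max_eq_right hu

lemma relu_mul (a u : ℝ) : relu (a * u) = min a 0 * u + |a| * relu u := by
  rcases le_total 0 a with ha | ha <;> rcases le_total 0 u with hu | hu
  · rw [relu_of_nonneg (mul_nonneg ha hu), relu_of_nonneg hu, min_eq_right ha, abs_of_nonneg ha]
    ring
  · rw [relu_of_nonpos (mul_nonpos_of_nonneg_of_nonpos ha hu), relu_of_nonpos hu, min_eq_right ha]
    ring
  · rw [relu_of_nonpos (mul_nonpos_of_nonpos_of_nonneg ha hu), relu_of_nonneg hu, min_eq_left ha,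
      abs_of_nonpos ha]
    ring
  · rw [relu_of_nonneg (mul_nonneg_of_nonpos_of_nonpos ha hu), relu_of_nonpos hu, min_eq_left ha]
    ring

lemma relu_mul_add {a : ℝ} (ha : a ≠ 0) (b t : ℝ) :
    relu (a * t + b) = min a 0 * (t - -b / a) + |a| * relu (t - -b / a) := by
  rw [← relu_mul]
  congr 1
  field_simp
  ring

lemma exists_relu_mul_add_eq_of_le (m c y : ℝ) :
    ∃ s d z : ℝ, (d ≠ 0 → y < z) ∧
      ∀ t, y ≤ t → relu (m * t + c) = relu (m * y + c) + s * (t - y) + d * relu (t - z) := by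
  rcases eq_or_ne m 0 with rfl | hm
  · exact ⟨0, 0, 0, fun h => (h rfl).elim, fun t _ => by ring_nf⟩
  rcases lt_or_ge y (-c / m) with hy | hy
  · refine ⟨min m 0, |m|, -c / m, fun _ => hy, fun t _ => ?_⟩
    rw [relu_mul_add hm c t, relu_mul_add hm c y, relu_of_nonpos (sub_nonpos.2 hy.le)]
    ring
  · refine ⟨min m 0 + |m|, 0, 0, fun h => (h rfl).elim, fun t ht => ?_⟩
    rw [relu_mul_add hm c t, relu_mul_add hm c y, relu_of_nonneg (sub_nonneg.2 hy),
      relu_of_nonneg (sub_nonneg.2 (hy.trans ht))]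
    ring

lemma eq_add_relu_of_eq_affine_of_le {f g : ℝ → ℝ} {y m s d z : ℝ} (hz : d ≠ 0 → y < z)
    (hfg : ∀ t ≤ y, f t = g t) (hg : ∀ t, y ≤ t → g t = g y + m * (t - y))
    (hf : ∀ t, y ≤ t → f t = f y + s * (t - y) + d * relu (t - z)) (t : ℝ) :
    f t = g t + (s - m) * relu (t - y) + d * relu (t - z) := by
  rcases le_total t y with ht | ht
  · have hd : d * relu (t - z) = 0 := by
      rcases eq_or_ne d 0 with rfl | hd
      · exact zero_mul _
      · rw [relu_of_nonpos (sub_nonpos.2 (ht.trans (hz hd).le)), mul_zero]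
    rw [hfg t ht, hd, relu_of_nonpos (sub_nonpos.2 ht)]
    ring
  · rw [hf t ht, hg t ht, hfg y le_rfl, relu_of_nonneg (sub_nonneg.2 ht)]
    ring

end Relu

section ReluSum

/-- The spline `∑ i, α i * σ(t - x i)` with knots `x i` and coefficients `α i`; a knot is active if
its coefficient is nonzero. -/
noncomputable def reluSum {ι : Type*} [Fintype ι] (x α : ι → ℝ) (t : ℝ) : ℝ :=
  ∑ i, α i * relu (t - x i)

variable {ι κ : Type*} [Fintype ι] [Fintype κ]

lemma reluSum_comp_equiv (e : κ ≃ ι) (x α : ι → ℝ) : reluSum (x ∘ e) (α ∘ e) = reluSum x α :=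
  funext fun t => e.sum_comp fun i => α i * relu (t - x i)

lemma reluSum_sum_mul (x : ι → ℝ) (w : κ → ℝ) (α : κ → ι → ℝ) (t : ℝ) :
    reluSum x (fun i => ∑ j, w j * α j i) t = ∑ j, w j * reluSum x (α j) t := by
  simp only [reluSum, Finset.sum_mul, Finset.mul_sum, mul_assoc]
  exact Finset.sum_comm

lemma reluSum_const_mul (x α : ι → ℝ) (w t : ℝ) :
    reluSum x (fun i => w * α i) t = w * reluSum x α t := by
  simp only [reluSum, Finset.mul_sum, mul_assoc]

lemma reluSum_succ {n : ℕ} (x α : Fin (n + 1) → ℝ) (t : ℝ) :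
    reluSum x α t =
      reluSum (Fin.init x) (Fin.init α) t + α (Fin.last n) * relu (t - x (Fin.last n)) :=
  Fin.sum_univ_castSucc _

lemma reluSum_eq_affine_of_le {x α : ι → ℝ} {y t : ℝ} (hx : ∀ i, α i ≠ 0 → x i ≤ y)
    (ht : y ≤ t) :
    reluSum x α t = reluSum x α y + (∑ i, α i) * (t - y) := by
  simp only [reluSum, Finset.sum_mul, ← Finset.sum_add_distrib]
  refine Finset.sum_congr rfl fun i _ => ?_
  rcases eq_or_ne (α i) 0 with hα | hα
  · simp only [hα, zero_mul, add_zero]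
  · rw [relu_of_nonneg (sub_nonneg.2 ((hx i hα).trans ht)),
      relu_of_nonneg (sub_nonneg.2 (hx i hα))]
    ring

lemma reluSum_ite_lt_of_le (x α : ι → ℝ) {y t : ℝ} (ht : t ≤ y) :
    reluSum x (fun i => if x i < y then α i else 0) t = reluSum x α t := by
  refine Finset.sum_congr rfl fun i _ => ?_
  dsimp only
  split_ifs with hi
  · rfl
  · rw [relu_of_nonpos (sub_nonpos.2 (ht.trans (not_lt.1 hi))), mul_zero, mul_zero]

lemma exists_sum_relu_mul_add_eq {a b : ι → ℝ} (ha : ∀ k, a k ≠ 0) (w : ι → ℝ) :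
    ∃ (p q : ℝ) (β : ι → ℝ), ∀ t,
      ∑ k, w k * relu (a k * t + b k) = p * t + q + reluSum (fun k => -b k / a k) β t := by
  refine ⟨∑ k, w k * min (a k) 0, ∑ k, w k * min (a k) 0 * (b k / a k), fun k => w k * |a k|,
    fun t => ?_⟩
  simp only [reluSum, Finset.sum_mul, ← Finset.sum_add_distrib]
  refine Finset.sum_congr rfl fun k _ => ?_
  rw [relu_mul_add (ha k)]
  ring

end ReluSum

section GapRefinement

variable {n : ℕ}

/-- `z` lies in the gap number `ν` of the knots `x 0 ≤ ⋯ ≤ x (n - 1)`, the open interval from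
`x (ν - 1)` to `x ν`; gap `0` is unbounded below and gap `n` is unbounded above. -/
def InGap (x : Fin n → ℝ) (ν : Fin (n + 1)) (z : ℝ) : Prop :=
  (∀ i : Fin n, (i : ℕ) + 1 = ν → x i < z) ∧ ∀ i : Fin n, (i : ℕ) = ν → z < x i

lemma inGap_last {x : Fin (n + 1) → ℝ} {z : ℝ} (hz : x (Fin.last n) < z) :
    InGap x (Fin.last (n + 1)) z := by
  refine ⟨fun i hi => ?_, fun i hi => absurd hi i.isLt.ne⟩
  rwa [show i = Fin.last n from Fin.ext (Nat.succ.inj hi)]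

lemma InGap.castSucc {x : Fin (n + 1) → ℝ} {ν : Fin (n + 1)} {z : ℝ}
    (hν : InGap (Fin.init x) ν z) (hz : z < x (Fin.last n)) : InGap x ν.castSucc z := by
  constructor <;> intro i hi
  · induction i using Fin.lastCases with
    | last => exact absurd hi ν.isLt.ne'
    | cast i => exact hν.1 i hi
  · induction i using Fin.lastCases with
    | last => exact hz
    | cast i => exact hν.2 i hi

/-- `f` is a continuous piecewise linear spline whose knots are the `x i` and at most one further
active knot in each of the `n + 1` gaps between them. -/
def IsGapRefinedSpline (x : Fin n → ℝ) (f : ℝ → ℝ) : Prop :=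
  ∃ (q₁ q₀ : ℝ) (α : Fin n → ℝ) (A X : Fin (n + 1) → ℝ),
    (∀ ν, A ν ≠ 0 → InGap x ν (X ν)) ∧ ∀ t, f t = q₁ * t + q₀ + reluSum x α t + reluSum X A t

lemma isGapRefinedSpline_relu_mul_add (x : Fin 0 → ℝ) (m c : ℝ) :
    IsGapRefinedSpline x fun t => relu (m * t + c) := by
  rcases eq_or_ne m 0 with rfl | hm
  · exact ⟨0, relu c, 0, 0, 0, fun ν h => (h rfl).elim, fun t => by simp [reluSum]⟩
  · refine ⟨min m 0, min m 0 * (c / m), 0, fun _ => |m|, fun _ => -c / m,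
      fun ν _ => ⟨fun i => i.elim0, fun i => i.elim0⟩, fun t => ?_⟩
    have h_knots : reluSum x 0 t = 0 := Fin.sum_univ_zero _
    have h_gap : reluSum (fun _ : Fin 1 => -c / m) (fun _ => |m|) t = |m| * relu (t - -c / m) :=
      Fin.sum_univ_one _
    simp only [h_knots, h_gap, relu_mul_add hm]
    ring

lemma IsGapRefinedSpline.of_init {x : Fin (n + 1) → ℝ} (hx : Monotone x) {f g : ℝ → ℝ}
    {s d z : ℝ} (hg : IsGapRefinedSpline (Fin.init x) g)
    (hfg : ∀ t ≤ x (Fin.last n), f t = g t) (hz : d ≠ 0 → x (Fin.last n) < z)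
    (hf : ∀ t, x (Fin.last n) ≤ t →
      f t = f (x (Fin.last n)) + s * (t - x (Fin.last n)) + d * relu (t - z)) :
    IsGapRefinedSpline x f := by
  obtain ⟨q₁, q₀, α, A, X, hX, hg⟩ := hg
  set y := x (Fin.last n)
  -- The knot of `g` in its last, unbounded gap may lie beyond `y`, where `f` no longer follows `g`.
  let B : Fin (n + 1) → ℝ := fun ν => if X ν < y then A ν else 0
  have hB : ∀ ν, B ν ≠ 0 → X ν < y ∧ A ν ≠ 0 := fun ν h => ite_ne_right_iff.1 h
  let h : ℝ → ℝ := fun t => q₁ * t + q₀ + reluSum (Fin.init x) α t + reluSum X B t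
  have hfh : ∀ t ≤ y, f t = h t := fun t ht => by
    rw [hfg t ht, hg t, ← reluSum_ite_lt_of_le X A ht]
  have h_affine : ∀ t, y ≤ t → h t = h y + (q₁ + ∑ i, α i + ∑ ν, B ν) * (t - y) := fun t ht => by
    have hinit : ∀ i, α i ≠ 0 → Fin.init x i ≤ y := fun i _ => hx i.castSucc.le_last
    simp only [h]
    rw [reluSum_eq_affine_of_le hinit ht, reluSum_eq_affine_of_le (fun ν hν => (hB ν hν).1.le) ht]
    ring
  refine ⟨q₁, q₀, Fin.snoc (α := fun _ => ℝ) α (s - (q₁ + ∑ i, α i + ∑ ν, B ν)),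
    Fin.snoc (α := fun _ => ℝ) B d, Fin.snoc (α := fun _ => ℝ) X z, fun ν => ?_, fun t => ?_⟩
  · induction ν using Fin.lastCases with
    | last => simpa only [Fin.snoc_last] using fun hd => inGap_last (hz hd)
    | cast ν =>
      simp only [Fin.snoc_castSucc]
      exact fun hν => (hX ν (hB ν hν).2).castSucc (hB ν hν).1
  · rw [eq_add_relu_of_eq_affine_of_le hz hfh h_affine hf t, reluSum_succ x, reluSum_succ]
    simp only [Fin.init_snoc, Fin.snoc_last, h]
    ring

theorem isGapRefinedSpline_relu_affine_add_reluSum {x : Fin n → ℝ} (hx : Monotone x)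
    (p q : ℝ) (β : Fin n → ℝ) :
    IsGapRefinedSpline x fun t => relu (p * t + q + reluSum x β t) := by
  induction n with
  | zero => simpa [reluSum] using isGapRefinedSpline_relu_mul_add x p q
  | succ n ih =>
    have h_left : ∀ t ≤ x (Fin.last n),
        p * t + q + reluSum x β t = p * t + q + reluSum (Fin.init x) (Fin.init β) t :=
      fun t ht => by
        rw [reluSum_succ, relu_of_nonpos (sub_nonpos.2 ht), mul_zero, add_zero]
    obtain ⟨m, c, h_right⟩ :
        ∃ m c, ∀ t, x (Fin.last n) ≤ t → p * t + q + reluSum x β t = m * t + c := by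
      refine ⟨p + ∑ i, β i,
        q + reluSum x β (x (Fin.last n)) - (∑ i, β i) * x (Fin.last n), fun t ht => ?_⟩
      rw [reluSum_eq_affine_of_le (fun i _ => hx i.le_last) ht]
      ring
    obtain ⟨s, d, z, hz, h_relu⟩ := exists_relu_mul_add_eq_of_le m c (x (Fin.last n))
    have h_init := ih (hx.comp Fin.strictMono_castSucc.monotone) (Fin.init β)
    refine h_init.of_init (s := s) hx (fun t ht => congrArg relu (h_left t ht)) hz fun t ht => ?_
    simpa only [h_right t ht, h_right _ le_rfl] using h_relu t ht

lemma exists_affine_add_sum_eq_of_isGapRefinedSpline {κ : Type*} [Fintype κ] {x : Fin n → ℝ}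
    {g : κ → ℝ → ℝ} (hg : ∀ j, IsGapRefinedSpline x (g j)) (w : κ → ℝ) (c b : ℝ) :
    ∃ (q₀ q₁ : ℝ) (α : Fin n → ℝ) (A X : κ → Fin (n + 1) → ℝ),
      (∀ t, c * t + b + ∑ j, w j * g j t =
        q₁ * t + q₀ + reluSum x α t + ∑ j, reluSum (X j) (A j) t) ∧
      ∀ j ν, A j ν ≠ 0 → InGap x ν (X j ν) := by
  choose q₁ q₀ α A X hX hg using hg
  refine ⟨b + ∑ j, w j * q₀ j, c + ∑ j, w j * q₁ j, fun i => ∑ j, w j * α j i,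
    fun j ν => w j * A j ν, X, fun t => ?_, fun j ν h => hX j ν (right_ne_zero_of_mul h)⟩
  simp only [hg, reluSum_sum_mul, reluSum_const_mul, mul_add, add_mul, Finset.sum_add_distrib,
    Finset.sum_mul, mul_assoc]
  ring

theorem two_layer_spline_structure_general {κ : Type*} [Fintype κ] {a₁ b₁ : Fin n → ℝ}
    (ha₁ : ∀ k, a₁ k ≠ 0) (a₂ : κ → Fin n → ℝ) (c₂ b₂ a₃ : κ → ℝ) (c₃ b₃ : ℝ)
    {τ : Equiv.Perm (Fin n)} (hτ : Monotone ((fun k => -b₁ k / a₁ k) ∘ τ)) :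
    ∃ (q₀ q₁ : ℝ) (α : Fin n → ℝ) (A X : κ → Fin (n + 1) → ℝ),
      (∀ t, c₃ * t + b₃ +
          ∑ j, a₃ j * relu ((∑ k, a₂ j k * relu (a₁ k * t + b₁ k)) + c₂ j * t + b₂ j) =
        q₁ * t + q₀ + reluSum ((fun k => -b₁ k / a₁ k) ∘ τ) α t + ∑ j, reluSum (X j) (A j) t) ∧
      ∀ j ν, A j ν ≠ 0 → InGap ((fun k => -b₁ k / a₁ k) ∘ τ) ν (X j ν) := by
  refine exists_affine_add_sum_eq_of_isGapRefinedSpline (fun j => ?_) a₃ c₃ b₃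
  obtain ⟨p, q, β, hβ⟩ := exists_sum_relu_mul_add_eq (b := b₁) ha₁ (a₂ j)
  convert isGapRefinedSpline_relu_affine_add_reluSum hτ (p + c₂ j) (q + b₂ j) (β ∘ τ) using 3
  rw [hβ, reluSum_comp_equiv]
  ring

end GapRefinement

/-- a two-hidden-layer ReLU network `f₃ ∈ Y_{n₁,n₂}` (with nonvanishing
first-layer weights and pairwise distinct ratios) is a CPL spline whose first-layer knots
`x₁ < … < x_{n₁}` are the increasing rearrangement of the points `-b_k^(1)/a_k^(1)`, and
whose active second-layer knots `x_{j,ν}` lie in the open interval `(x_ν, x_{ν+1})`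
(with the conventions `x₀ = -∞` and `x_{n₁+1} = +∞`).  Here the Lean index `i : Fin n₁`
corresponds to the paper's knot `x_{i+1}`, and `ν : Fin (n₁+1)` to the paper's `ν ∈ {0,…,n₁}`;
the interval condition `x_{j,ν} ∈ (x_ν, x_{ν+1})` is expressed by the two universally
quantified implications below. -/
theorem two_layer_spline_structure (n1 n2 : ℕ) (hn1 : 1 ≤ n1) (hn2 : 2 ≤ n2)
    (a1 b1 : Fin n1 → ℝ) (a2 : Fin n2 → Fin n1 → ℝ) (c2 b2 a3 : Fin n2 → ℝ)
    (c3 b3 : ℝ)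
    (ha1 : ∀ k, a1 k ≠ 0)
    (hdist : Function.Injective fun k => -(b1 k) / a1 k)
    (f : ℝ → ℝ)
    (hf : ∀ t, f t = c3 * t + b3 +
      ∑ j, a3 j * relu ((∑ k, a2 j k * relu (a1 k * t + b1 k)) + c2 j * t + b2 j)) :
    ∃ (q0 q1 : ℝ) (x α : Fin n1 → ℝ) (A XX : Fin n2 → Fin (n1 + 1) → ℝ),
      StrictMono x ∧
      Set.range x = Set.range (fun k => -(b1 k) / a1 k) ∧
      (∀ t, f t = q1 * t + q0 + (∑ ℓ, α ℓ * relu (t - x ℓ))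
        + ∑ j, ∑ ν, A j ν * relu (t - XX j ν)) ∧
      (∀ j ν, A j ν ≠ 0 →
        (∀ i : Fin n1, (i : ℕ) + 1 = (ν : ℕ) → x i < XX j ν) ∧
        (∀ i : Fin n1, (i : ℕ) = (ν : ℕ) → XX j ν < x i)) := by
  let τ := Tuple.sort fun k => -(b1 k) / a1 k
  have hτ : Monotone ((fun k => -(b1 k) / a1 k) ∘ τ) := Tuple.monotone_sort _
  obtain ⟨q0, q1, α, A, X, h_eq, hX⟩ := two_layer_spline_structure_general ha1 a2 c2 b2 a3 c3 b3 hτ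
  exact ⟨q0, q1, _, α, A, X, hτ.strictMono_of_injective (hdist.comp τ.injective),
    τ.surjective.range_comp _, fun t => (hf t).trans (h_eq t), hX⟩
end

section
/- Let n₁ ≥ 1 and n₂ ≥ 2, and let y₁ < y₂ < … < y_N be N = (n₁+1)(n₂+1) − 1 pairwise distinct real numbers. Then there exists a function f₃ ∈ Y_{n₁,n₂} such that the set of points at which f₃ is not differentiable is exactly {y₁, …, y_N}; in other words, f₃ possesses all N prescribed breakpoints and they are all active. -/
/-- `f` belongs to the two-hidden-layer ReLU network class `Y_{n₁,n₂}`. -/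
def IsReLU2 (n1 n2 : ℕ) (f : ℝ → ℝ) : Prop :=
  ∃ (a1 b1 : Fin n1 → ℝ) (a2 : Fin n2 → Fin n1 → ℝ) (c2 b2 a3 : Fin n2 → ℝ)
    (c3 b3 : ℝ),
    ∀ t, f t = c3 * t + b3 +
      ∑ j, a3 j * relu ((∑ k, a2 j k * relu (a1 k * t + b1 k)) + c2 j * t + b2 j)

/-!
Label the prescribed points cyclically as `z₀ₖ < z₁ₖ < ⋯ < xₖ < z₀,ₖ₊₁ < ⋯`. The first layer breaks
at the points `xₖ`, and the `j`-th neuron of the second layer is fed a zigzag with corners at the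
`xₖ` and zeros at the `zⱼₖ`. Rectifying it makes the derivative jump up at each `zⱼₖ`, and jump down
at those `xₖ` where the zigzag is positive. Hence no cancellation can occur in the sum over `j`: at
a given point all the jumps have the same sign. The zigzags of the neurons `0` and `1` have opposite
signs at every `xₖ`, so that each `xₖ` is a corner of one of the two rectified zigzags.
-/

open Set Filter Topology

theorem relu_of_nonneg_s7 {a : ℝ} (h : 0 ≤ a) : relu a = a := max_eq_left h

theorem relu_of_nonpos_s7 {a : ℝ} (h : a ≤ 0) : relu a = 0 := max_eq_right h

/-- `f` has one-sided derivatives at `t`, and the right one exceeds the left one by `d`. This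
measures a breakpoint of `f` in a way that is additive in `f`. -/
def HasDerivJump (f : ℝ → ℝ) (d t : ℝ) : Prop :=
  ∃ l, HasDerivWithinAt f l (Iic t) t ∧ HasDerivWithinAt f (l + d) (Ici t) t

theorem hasDerivJump_zero_of_hasDerivAt {f : ℝ → ℝ} {m t : ℝ} (h : HasDerivAt f m t) :
    HasDerivJump f 0 t :=
  ⟨m, h.hasDerivWithinAt, by simpa using h.hasDerivWithinAt⟩

namespace HasDerivJump

variable {f g : ℝ → ℝ} {d e t : ℝ}

theorem differentiableAt_iff (h : HasDerivJump f d t) : DifferentiableAt ℝ f t ↔ d = 0 := by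
  obtain ⟨l, hl, hr⟩ := h
  constructor
  · intro hf
    have left_eq := (uniqueDiffWithinAt_Iic t).eq_deriv _ hl hf.hasDerivAt.hasDerivWithinAt
    have right_eq := (uniqueDiffWithinAt_Ici t).eq_deriv _ hr hf.hasDerivAt.hasDerivWithinAt
    linarith
  · rintro rfl
    rw [add_zero] at hr
    have hf := hl.union hr
    rw [Iic_union_Ici, hasDerivWithinAt_univ] at hf
    exact hf.differentiableAt

theorem continuousAt (h : HasDerivJump f d t) : ContinuousAt f t := by
  obtain ⟨l, hl, hr⟩ := h
  exact continuousAt_iff_continuous_left_right.2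
    ⟨hl.continuousWithinAt, hr.continuousWithinAt⟩

theorem congr_of_eventuallyEq (h : HasDerivJump f d t) (hfg : g =ᶠ[𝓝 t] f) :
    HasDerivJump g d t := by
  obtain ⟨l, hl, hr⟩ := h
  exact ⟨l, hl.congr_of_eventuallyEq (hfg.filter_mono nhdsWithin_le_nhds) hfg.eq_of_nhds,
    hr.congr_of_eventuallyEq (hfg.filter_mono nhdsWithin_le_nhds) hfg.eq_of_nhds⟩

theorem add (hf : HasDerivJump f d t) (hg : HasDerivJump g e t) :
    HasDerivJump (fun u => f u + g u) (d + e) t := by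
  obtain ⟨l, hl, hr⟩ := hf
  obtain ⟨l', hl', hr'⟩ := hg
  exact ⟨l + l', hl.add hl', (hr.add hr').congr_deriv (by ring)⟩

theorem const_mul (c : ℝ) (h : HasDerivJump f d t) :
    HasDerivJump (fun u => c * f u) (c * d) t := by
  obtain ⟨l, hl, hr⟩ := h
  exact ⟨c * l, hl.const_mul c, (hr.const_mul c).congr_deriv (by ring)⟩

theorem sum {ι : Type*} {s : Finset ι} {F : ι → ℝ → ℝ} {D : ι → ℝ}
    (h : ∀ i ∈ s, HasDerivJump (F i) (D i) t) :
    HasDerivJump (fun u => ∑ i ∈ s, F i u) (∑ i ∈ s, D i) t := by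
  choose! l hl hr using h
  refine ⟨∑ i ∈ s, l i, HasDerivWithinAt.fun_sum hl, ?_⟩
  rw [← Finset.sum_add_distrib]
  exact HasDerivWithinAt.fun_sum hr

theorem relu_comp_of_pos (h : HasDerivJump g d t) (ht : 0 < g t) :
    HasDerivJump (fun u => relu (g u)) d t := by
  refine h.congr_of_eventuallyEq ?_
  filter_upwards [h.continuousAt.eventually_const_lt ht] with u hu
  exact relu_of_nonneg_s7 hu.le

end HasDerivJump

theorem hasDerivJump_relu_comp_of_neg {g : ℝ → ℝ} {t : ℝ} (hg : ContinuousAt g t) (ht : g t < 0) :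
    HasDerivJump (fun u => relu (g u)) 0 t := by
  refine (hasDerivJump_zero_of_hasDerivAt (hasDerivAt_const t (0 : ℝ))).congr_of_eventuallyEq ?_
  filter_upwards [hg.eventually_lt_const ht] with u hu
  exact relu_of_nonpos_s7 hu.le

theorem hasDerivJump_relu_comp_of_eq_zero {g : ℝ → ℝ} {m t : ℝ} (hg : HasDerivAt g m t)
    (ht : g t = 0) : HasDerivJump (fun u => relu (g u)) |m| t := by
  have slope_g : Tendsto (slope g t) (𝓝[≠] t) (𝓝 m) := hasDerivAt_iff_tendsto_slope.1 hg
  refine ⟨min m 0, ?_, ?_⟩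
  · rw [← hasDerivWithinAt_Iio_iff_Iic, hasDerivWithinAt_iff_tendsto_slope' self_notMem_Iio]
    refine ((slope_g.mono_left (nhdsLT_le_nhdsNE t)).min tendsto_const_nhds).congr' ?_
    filter_upwards [self_mem_nhdsWithin] with u (hu : u < t)
    simp only [slope_def_field, ht, sub_zero, relu, max_self]
    rw [← min_div_div_right_of_nonpos (sub_nonpos.2 hu.le), zero_div]
  · have right_slope : min m 0 + |m| = max m 0 := by
      rw [← sub_zero m, ← max_sub_min_eq_abs', sub_zero, add_sub_cancel]
    rw [right_slope, ← hasDerivWithinAt_Ioi_iff_Ici,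
      hasDerivWithinAt_iff_tendsto_slope' self_notMem_Ioi]
    refine ((slope_g.mono_left (nhdsGT_le_nhdsNE t)).max tendsto_const_nhds).congr' ?_
    filter_upwards [self_mem_nhdsWithin] with u (hu : t < u)
    simp only [slope_def_field, ht, sub_zero, relu, max_self]
    rw [← max_div_div_right (sub_nonneg.2 hu.le), zero_div]

theorem hasDerivJump_relu_sub (a t : ℝ) :
    HasDerivJump (fun u => relu (u - a)) (if t = a then 1 else 0) t := by
  have deriv_sub : HasDerivAt (fun u => u - a) 1 t := (hasDerivAt_id t).sub_const a
  rcases lt_trichotomy t a with hlt | rfl | hgt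
  · rw [if_neg hlt.ne]
    exact hasDerivJump_relu_comp_of_neg deriv_sub.continuousAt (sub_neg.2 hlt)
  · simpa using hasDerivJump_relu_comp_of_eq_zero deriv_sub (sub_self t)
  · rw [if_neg hgt.ne']
    exact (hasDerivJump_zero_of_hasDerivAt deriv_sub).relu_comp_of_pos (sub_pos.2 hgt)

/-- The sequences `z` and `x` interlace: `z 0 < x 0 < z 1 < x 1 < ⋯`. They serve as the zeros and
the corners of a zigzag. -/
structure Interlaced (z x : ℕ → ℝ) : Prop where
  lt (k : ℕ) : z k < x k
  lt_succ (k : ℕ) : x k < z (k + 1)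

theorem Interlaced.strictMono {z x : ℕ → ℝ} (h : Interlaced z x) : StrictMono x :=
  strictMono_nat_of_lt_succ fun k => (h.lt_succ k).trans (h.lt (k + 1))

/-- The slope of the `k`-th piece of the zigzag with zeros `z`, corners `x` and initial slope `s`.
The factors are forced by the requirement that the lines of consecutive slopes through `(z i, 0)`
and `(z (i + 1), 0)` meet above or below `x i`. -/
noncomputable def zigzagSlope (z x : ℕ → ℝ) (s : ℝ) (k : ℕ) : ℝ :=
  s * ∏ i ∈ Finset.range k, (x i - z i) / (x i - z (i + 1))

/-- The zigzag with `n` corners `x 0, …, x (n - 1)`, zeros `z 0, …, z n` and initial slope `s`,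
written as the input of a second-layer neuron. -/
noncomputable def zigzag (z x : ℕ → ℝ) (s : ℝ) (n : ℕ) (t : ℝ) : ℝ :=
  ∑ k ∈ Finset.range n, (zigzagSlope z x s (k + 1) - zigzagSlope z x s k) * relu (t - x k)
    + s * (t - z 0)

theorem hasDerivJump_zigzag (z x : ℕ → ℝ) (s : ℝ) (n : ℕ) (t : ℝ) :
    HasDerivJump (zigzag z x s n)
      (∑ k ∈ Finset.range n, (zigzagSlope z x s (k + 1) - zigzagSlope z x s k) *
        if t = x k then 1 else 0) t := by
  have jump_affine : HasDerivJump (fun u => s * (u - z 0)) 0 t :=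
    hasDerivJump_zero_of_hasDerivAt (((hasDerivAt_id t).sub_const _).const_mul s)
  have jump_corners := HasDerivJump.sum fun k (_ : k ∈ Finset.range n) =>
    (hasDerivJump_relu_sub (x k) t).const_mul (zigzagSlope z x s (k + 1) - zigzagSlope z x s k)
  rw [← add_zero (∑ k ∈ Finset.range n, _)]
  exact jump_corners.add jump_affine

theorem exists_le_and_lt_of_monotone {α : Type*} [LinearOrder α] {x : ℕ → α} (hx : Monotone x)
    (n : ℕ) (t : α) :
    ∃ i ≤ n, (∀ k < i, x k ≤ t) ∧ ∀ k, i ≤ k → k < n → t < x k := by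
  induction n with
  | zero => exact ⟨0, le_rfl, by simp, by simp⟩
  | succ n ih =>
    rcases le_or_gt (x n) t with hn | hn
    · exact ⟨n + 1, le_rfl, fun k hk => (hx (Nat.le_of_lt_succ hk)).trans hn, by omega⟩
    · obtain ⟨i, hin, left, right⟩ := ih
      refine ⟨i, by omega, left, fun k hik hk => ?_⟩
      rcases Nat.lt_succ_iff_lt_or_eq.1 hk with hkn | rfl
      exacts [right k hik hkn, hn]

namespace Interlaced

variable {z x : ℕ → ℝ} {s t : ℝ} {n i : ℕ}

theorem ratio_neg (h : Interlaced z x) (k : ℕ) : (x k - z k) / (x k - z (k + 1)) < 0 :=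
  div_neg_of_pos_of_neg (sub_pos.2 (h.lt k)) (sub_neg.2 (h.lt_succ k))

theorem zigzagSlope_ne_zero (h : Interlaced z x) (hs : s ≠ 0) (k : ℕ) :
    zigzagSlope z x s k ≠ 0 :=
  mul_ne_zero hs (Finset.prod_ne_zero_iff.2 fun i _ => (h.ratio_neg i).ne)

theorem zigzagSlope_neg_one_pow_pos (h : Interlaced z x) (k : ℕ) :
    0 < zigzagSlope z x ((-1) ^ k) k := by
  have slope_eq : zigzagSlope z x ((-1) ^ k) k =
      ∏ i ∈ Finset.range k, -((x i - z i) / (x i - z (i + 1))) := by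
    rw [Finset.prod_neg, Finset.card_range, zigzagSlope]
  rw [slope_eq]
  exact Finset.prod_pos fun i _ => neg_pos.2 (h.ratio_neg i)

theorem zigzagSlope_succ_neg (h : Interlaced z x) (hi : 0 < zigzagSlope z x s i) :
    zigzagSlope z x s (i + 1) < 0 := by
  rw [zigzagSlope, Finset.prod_range_succ, ← mul_assoc]
  exact mul_neg_of_pos_of_neg hi (h.ratio_neg i)

theorem zigzagSlope_succ_mul_sub (h : Interlaced z x) (k : ℕ) :
    zigzagSlope z x s (k + 1) * (x k - z (k + 1)) = zigzagSlope z x s k * (x k - z k) := by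
  have hne : x k - z (k + 1) ≠ 0 := (sub_neg.2 (h.lt_succ k)).ne
  rw [zigzagSlope, zigzagSlope, Finset.prod_range_succ]
  field_simp

theorem zigzag_eq (h : Interlaced z x) (hin : i ≤ n) (left : ∀ k < i, x k ≤ t)
    (right : ∀ k, i ≤ k → k < n → t ≤ x k) :
    zigzag z x s n t = zigzagSlope z x s i * (t - z i) := by
  have sum_right : ∑ k ∈ Finset.Ico i n,
      (zigzagSlope z x s (k + 1) - zigzagSlope z x s k) * relu (t - x k) = 0 := by
    refine Finset.sum_eq_zero fun k hk => ?_
    obtain ⟨hik, hkn⟩ := Finset.mem_Ico.1 hk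
    rw [relu_of_nonpos_s7 (sub_nonpos.2 (right k hik hkn)), mul_zero]
  have sum_left : ∑ k ∈ Finset.range i,
      (zigzagSlope z x s (k + 1) - zigzagSlope z x s k) * relu (t - x k) =
        ∑ k ∈ Finset.range i, (zigzagSlope z x s (k + 1) * (t - z (k + 1)) -
          zigzagSlope z x s k * (t - z k)) := by
    refine Finset.sum_congr rfl fun k hk => ?_
    rw [relu_of_nonneg_s7 (sub_nonneg.2 (left k (Finset.mem_range.1 hk)))]
    linear_combination -h.zigzagSlope_succ_mul_sub (s := s) k
  have slope_zero : zigzagSlope z x s 0 = s := by simp [zigzagSlope]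
  rw [zigzag, ← Finset.sum_range_add_sum_Ico _ hin, sum_right, sum_left,
    Finset.sum_range_sub (fun k => zigzagSlope z x s k * (t - z k)), slope_zero]
  ring

theorem zigzag_corner (h : Interlaced z x) (hin : i < n) :
    zigzag z x s n (x i) = zigzagSlope z x s i * (x i - z i) :=
  h.zigzag_eq hin.le (fun _ hk => (h.strictMono hk).le)
    fun _ hik _ => h.strictMono.monotone hik

theorem zigzag_zero (h : Interlaced z x) (hin : i ≤ n) : zigzag z x s n (z i) = 0 := by
  have left (k : ℕ) (hk : k < i) : x k ≤ z i := by
    obtain ⟨m, rfl⟩ := Nat.exists_eq_add_one_of_ne_zero (Nat.ne_zero_of_lt hk)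
    exact (h.strictMono.monotone (Nat.le_of_lt_succ hk)).trans (h.lt_succ m).le
  rw [h.zigzag_eq hin left fun k hik _ => (h.lt i).le.trans (h.strictMono.monotone hik),
    sub_self, mul_zero]

theorem zigzag_eq_zero_iff (h : Interlaced z x) (hs : s ≠ 0) :
    zigzag z x s n t = 0 ↔ ∃ k ≤ n, t = z k := by
  constructor
  · intro ht
    obtain ⟨i, hin, left, right⟩ := exists_le_and_lt_of_monotone h.strictMono.monotone n t
    rw [h.zigzag_eq hin left fun k hik hkn => (right k hik hkn).le] at ht
    exact ⟨i, hin, sub_eq_zero.1 ((mul_eq_zero.1 ht).resolve_left (h.zigzagSlope_ne_zero hs i))⟩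
  · rintro ⟨k, hk, rfl⟩
    exact h.zigzag_zero hk

theorem exists_hasDerivAt_zigzag (h : Interlaced z x) (hs : s ≠ 0) (ht : ∀ k < n, t ≠ x k) :
    ∃ m ≠ 0, HasDerivAt (zigzag z x s n) m t := by
  obtain ⟨i, hin, left, right⟩ := exists_le_and_lt_of_monotone h.strictMono.monotone n t
  refine ⟨zigzagSlope z x s i, h.zigzagSlope_ne_zero hs i, ?_⟩
  have near_left : ∀ᶠ u in 𝓝 t, ∀ k ∈ Iio i, x k < u :=
    (finite_Iio i).eventually_all.2 fun k hk =>
      lt_mem_nhds ((left k hk).lt_of_ne (ht k (hk.trans_le hin)).symm)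
  have near_right : ∀ᶠ u in 𝓝 t, ∀ k ∈ Ico i n, u < x k :=
    (finite_Ico i n).eventually_all.2 fun k hk => gt_mem_nhds (right k hk.1 hk.2)
  have deriv_piece : HasDerivAt (fun u => zigzagSlope z x s i * (u - z i))
      (zigzagSlope z x s i) t := by
    simpa using ((hasDerivAt_id t).sub_const (z i)).const_mul (zigzagSlope z x s i)
  refine deriv_piece.congr_of_eventuallyEq ?_
  filter_upwards [near_left, near_right] with u hl hr
  exact h.zigzag_eq hin (fun k hk => (hl k hk).le) fun k hik hkn => (hr k ⟨hik, hkn⟩).le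

theorem exists_hasDerivJump_relu_zigzag_corner (h : Interlaced z x) (hs : s ≠ 0) (hin : i < n) :
    ∃ d ≤ 0, (0 < zigzagSlope z x s i → d < 0) ∧
      HasDerivJump (fun u => relu (zigzag z x s n u)) d (x i) := by
  have jump := hasDerivJump_zigzag z x s n (x i)
  simp only [h.strictMono.injective.eq_iff, mul_ite, mul_one, mul_zero, Finset.sum_ite_eq,
    Finset.mem_range, if_pos hin] at jump
  have height_pos : 0 < x i - z i := sub_pos.2 (h.lt i)
  rcases lt_or_gt_of_ne (h.zigzagSlope_ne_zero hs i) with hneg | hpos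
  · refine ⟨0, le_rfl, fun hpos => absurd hpos hneg.not_gt,
      hasDerivJump_relu_comp_of_neg jump.continuousAt ?_⟩
    rw [h.zigzag_corner hin]
    exact mul_neg_of_neg_of_pos hneg height_pos
  · have jump_neg : zigzagSlope z x s (i + 1) - zigzagSlope z x s i < 0 :=
      sub_neg.2 ((h.zigzagSlope_succ_neg hpos).trans hpos)
    refine ⟨_, jump_neg.le, fun _ => jump_neg, jump.relu_comp_of_pos ?_⟩
    rw [h.zigzag_corner hin]
    exact mul_pos hpos height_pos

theorem exists_hasDerivJump_relu_zigzag_of_ne (h : Interlaced z x) (hs : s ≠ 0)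
    (ht : ∀ k < n, t ≠ x k) :
    ∃ d ≥ 0, (d ≠ 0 ↔ ∃ k ≤ n, t = z k) ∧
      HasDerivJump (fun u => relu (zigzag z x s n u)) d t := by
  obtain ⟨m, hm, deriv_zigzag⟩ := h.exists_hasDerivAt_zigzag hs ht
  simp only [← h.zigzag_eq_zero_iff hs]
  rcases lt_trichotomy (zigzag z x s n t) 0 with hneg | hzero | hpos
  · exact ⟨0, le_rfl, by simp [hneg.ne],
      hasDerivJump_relu_comp_of_neg deriv_zigzag.continuousAt hneg⟩
  · exact ⟨|m|, abs_nonneg m, by simp [hm, hzero],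
      hasDerivJump_relu_comp_of_eq_zero deriv_zigzag hzero⟩
  · exact ⟨0, le_rfl, by simp [hpos.ne'],
      (hasDerivJump_zero_of_hasDerivAt deriv_zigzag).relu_comp_of_pos hpos⟩

end Interlaced

theorem not_differentiableAt_sum_relu_zigzag_iff {ι : Type*} [Fintype ι] {z : ι → ℕ → ℝ}
    {x : ℕ → ℝ} {s : ι → ℝ} {n : ℕ} (h : ∀ j, Interlaced (z j) x) (hs : ∀ j, s j ≠ 0)
    (hpos : ∀ k < n, ∃ j, 0 < zigzagSlope (z j) x (s j) k) {t : ℝ} :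
    ¬ DifferentiableAt ℝ (fun u => ∑ j, relu (zigzag (z j) x (s j) n u)) t ↔
      (∃ k < n, t = x k) ∨ ∃ j, ∃ k ≤ n, t = z j k := by
  by_cases hx : ∃ k < n, t = x k
  · refine iff_of_true ?_ (Or.inl hx)
    obtain ⟨k, hk, rfl⟩ := hx
    choose d d_nonpos d_neg jump using fun j =>
      (h j).exists_hasDerivJump_relu_zigzag_corner (hs j) hk
    obtain ⟨j, hj⟩ := hpos k hk
    rw [(HasDerivJump.sum fun j _ => jump j).differentiableAt_iff]
    exact (Finset.sum_neg' (fun j _ => d_nonpos j) ⟨j, Finset.mem_univ j, d_neg j hj⟩).ne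
  · rw [or_iff_right hx]
    push Not at hx
    choose d d_nonneg d_ne_zero jump using fun j =>
      (h j).exists_hasDerivJump_relu_zigzag_of_ne (hs j) hx
    rw [(HasDerivJump.sum fun j _ => jump j).differentiableAt_iff,
      Finset.sum_eq_zero_iff_of_nonneg fun j _ => d_nonneg j]
    simp only [Finset.mem_univ, true_imp_iff, not_forall, ← d_ne_zero]

theorem isReLU2_sum_relu_zigzag {n1 n2 : ℕ} (z : Fin n2 → ℕ → ℝ) (x : ℕ → ℝ) (s : Fin n2 → ℝ) :
    IsReLU2 n1 n2 fun t => ∑ j, relu (zigzag (z j) x (s j) n1 t) := by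
  refine ⟨fun _ => 1, fun k => -x k,
    fun j k => zigzagSlope (z j) x (s j) (k + 1) - zigzagSlope (z j) x (s j) k,
    s, fun j => -(s j * z j 0), fun _ => 1, 0, 0, fun t => ?_⟩
  simp only [zero_mul, zero_add, one_mul, ← sub_eq_add_neg]
  refine Finset.sum_congr rfl fun j _ => ?_
  rw [zigzag, Finset.sum_range, mul_sub, add_sub_assoc]

theorem exists_strictMono_nat_extension {α : Type*} [Preorder α] [IsDirectedOrder α] [Nonempty α]
    [NoMaxOrder α] {N : ℕ} {y : Fin N → α} (hy : StrictMono y) :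
    ∃ Y : ℕ → α, StrictMono Y ∧ ∀ p : Fin N, Y p = y p := by
  obtain ⟨b, hb⟩ := (finite_range y).bddAbove
  obtain ⟨c, hbc⟩ := exists_gt b
  obtain ⟨tail, tail_mono, tail_zero⟩ := Nat.exists_strictMono' c
  have lt_tail (p : Fin N) (q : ℕ) : y p < tail q :=
    ((hb (mem_range_self p)).trans_lt hbc).trans_le
      (tail_zero ▸ tail_mono.monotone (Nat.zero_le q))
  refine ⟨fun p => if h : p < N then y ⟨p, h⟩ else tail (p - N), fun p q hpq => ?_, by simp⟩
  by_cases hp : p < N <;> by_cases hq : q < N <;> simp only [hp, hq, dite_true, dite_false]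
  · exact hy hpq
  · exact lt_tail _ _
  · omega
  · exact tail_mono (by omega)

theorem lt_succ_mul_succ_sub_one_iff {n m p : ℕ} :
    p < (n + 1) * (m + 1) - 1 ↔
      (∃ k < n, p = (m + 1) * k + m) ∨ ∃ j : Fin m, ∃ k ≤ n, p = (m + 1) * k + j := by
  have mul_succ_succ : (n + 1) * (m + 1) = (m + 1) * n + (m + 1) := by ring
  constructor
  · intro hp
    have div_mod := Nat.div_add_mod p (m + 1)
    have mod_le : p % (m + 1) ≤ m := Nat.le_of_lt_succ (Nat.mod_lt p (by omega))
    rcases mod_le.eq_or_lt with last | not_last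
    · refine Or.inl ⟨p / (m + 1), ?_, by omega⟩
      exact Nat.lt_of_mul_lt_mul_left (a := m + 1) (by omega)
    · refine Or.inr ⟨⟨p % (m + 1), not_last⟩, p / (m + 1), ?_, div_mod.symm⟩
      exact Nat.le_of_lt_add_one (Nat.div_lt_of_lt_mul (by rw [mul_add]; omega))
  · rintro (⟨k, hk, rfl⟩ | ⟨j, k, hk, rfl⟩)
    · have row_le : (m + 1) * (k + 1) ≤ (m + 1) * n := Nat.mul_le_mul_left _ hk
      rw [mul_add] at row_le
      omega
    · have row_le : (m + 1) * k ≤ (m + 1) * n := Nat.mul_le_mul_left _ hk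
      omega

/-- for `n₁ ≥ 1`, `n₂ ≥ 2` and any `(n₁+1)(n₂+1) − 1` prescribed pairwise
distinct real numbers, there is a function `f₃ ∈ Y_{n₁,n₂}` whose set of
non-differentiability points is exactly the prescribed set (all prescribed breakpoints
are present and active). -/
theorem two_layer_max_prescribed_breakpoints (n1 n2 : ℕ) (hn1 : 1 ≤ n1) (hn2 : 2 ≤ n2)
    (y : Fin ((n1 + 1) * (n2 + 1) - 1) → ℝ) (hy : StrictMono y) :
    ∃ f : ℝ → ℝ, IsReLU2 n1 n2 f ∧
      {t : ℝ | ¬ DifferentiableAt ℝ f t} = Set.range y := by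
  obtain ⟨Y, hY, hYy⟩ := exists_strictMono_nat_extension hy
  let x (k : ℕ) : ℝ := Y ((n2 + 1) * k + n2)
  let z (j : Fin n2) (k : ℕ) : ℝ := Y ((n2 + 1) * k + j)
  let s (j : Fin n2) : ℝ := (-1) ^ (j : ℕ)
  have interlaced (j : Fin n2) : Interlaced (z j) x :=
    ⟨fun k => hY (by omega), fun k => hY (by rw [mul_add]; omega)⟩
  have slope_pos (k : ℕ) (_ : k < n1) : ∃ j, 0 < zigzagSlope (z j) x (s j) k := by
    refine ⟨⟨k % 2, (Nat.mod_lt k two_pos).trans_le hn2⟩, ?_⟩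
    simpa only [s, ← neg_one_pow_eq_pow_mod_two] using
      (interlaced _).zigzagSlope_neg_one_pow_pos k
  have mem_range_iff (t : ℝ) :
      t ∈ range y ↔ (∃ k < n1, t = x k) ∨ ∃ j, ∃ k ≤ n1, t = z j k := by
    simp only [mem_range, ← hYy, Fin.exists_iff, lt_succ_mul_succ_sub_one_iff]
    grind
  refine ⟨_, isReLU2_sum_relu_zigzag z x s, Set.ext fun t => ?_⟩
  rw [mem_ofPred_eq, mem_range_iff]
  exact not_differentiableAt_sum_relu_zigzag_iff interlaced (by simp [s]) slope_pos
end

section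
/- Consider the normalized two-hidden-layer model consisting of functions f₃(t) = c^(3)·t + b^(3) + Σ_{j=1}^{n₂} a_j^(3)·σ( Σ_{k=1}^{n₁} a_{j,k}^(2)·σ(t + b_k^(1)) + s_j·t + b_j^(2) ) with s_j ∈ {−1, 0, 1} and real parameters c^(3), b^(3), a_j^(3), a_{j,k}^(2), b_k^(1), b_j^(2). Then: (i) every f₃ ∈ Y_{n₁,n₂} admits such a representation (so the normalized model equals Y_{n₁,n₂}); and (ii) the n₁·n₂ + 2·n₂ + n₁ + 2 real parameters are independent: for any one of these real parameters and any a priori fixed constant value of it, the class of functions representable with that parameter so fixed is a proper subset of Y_{n₁,n₂}. -/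
/-- Parameters of the normalized two-hidden-layer model: the `n₁n₂ + 2n₂ + n₁ + 2`
real parameters `c³, b³, a³, a², b¹, b²` together with the sign vector `s`. -/
structure NParams2 (n1 n2 : ℕ) where
  c3 : ℝ
  b3 : ℝ
  a3 : Fin n2 → ℝ
  a2 : Fin n2 → Fin n1 → ℝ
  b1 : Fin n1 → ℝ
  b2 : Fin n2 → ℝ
  s : Fin n2 → ℝ

/-- `s` is a sign vector, `s ∈ {−1,0,1}^{n₂}`. -/
def NParams2.valid {n1 n2 : ℕ} (p : NParams2 n1 n2) : Prop :=
  ∀ j, p.s j = -1 ∨ p.s j = 0 ∨ p.s j = 1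

/-- The function realized by the normalized parameters:
`t ↦ c³·t + b³ + Σ_j a_j³·σ(Σ_k a_{j,k}²·σ(t + b_k¹) + s_j·t + b_j²)`. -/
noncomputable def NParams2.fn {n1 n2 : ℕ} (p : NParams2 n1 n2) : ℝ → ℝ :=
  fun t => p.c3 * t + p.b3 +
    ∑ j, p.a3 j * relu ((∑ k, p.a2 j k * relu (t + p.b1 k)) + p.s j * t + p.b2 j)

/-- Index type enumerating the real parameters of the normalized model. -/
inductive PIdx2 (n1 n2 : ℕ) where
  | c3 : PIdx2 n1 n2
  | b3 : PIdx2 n1 n2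
  | a3 (j : Fin n2) : PIdx2 n1 n2
  | a2 (j : Fin n2) (k : Fin n1) : PIdx2 n1 n2
  | b1 (k : Fin n1) : PIdx2 n1 n2
  | b2 (j : Fin n2) : PIdx2 n1 n2

/-- Read off the real parameter with the given index. -/
def NParams2.get {n1 n2 : ℕ} (p : NParams2 n1 n2) : PIdx2 n1 n2 → ℝ
  | .c3 => p.c3
  | .b3 => p.b3
  | .a3 j => p.a3 j
  | .a2 j k => p.a2 j k
  | .b1 k => p.b1 k
  | .b2 j => p.b2 j

/-!
For every choice of parameters the network is piecewise affine in `t`, and along a suitable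
zigzag all its `(n₁+1)(n₂+1)` activation patterns occur on intervals of `ℝ`. The slopes and
intercepts found there determine all the parameters rationally, so on an open set of parameters the
map to finitely many values of the network has a smooth left inverse, and its image has Hausdorff
dimension `n₁n₂ + 2n₂ + n₁ + 2`. Once a parameter is fixed, these values fill only locally Lipschitz
images of a hyperplane, one for each of the finitely many sign vectors, and the dimension drops.
-/

open Filter Topology Module

section HausdorffDimension

variable {E : Type*} [NormedAddCommGroup E] [NormedSpace ℝ E] [FiniteDimensional ℝ E]

lemma dimH_setOf_linearMap_eq_lt_finrank {φ : E →ₗ[ℝ] ℝ} (hφ : φ ≠ 0) (c : ℝ) :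
    dimH {x | φ x = c} < finrank ℝ E := by
  obtain ⟨x, hx⟩ : ∃ x, φ x = c := LinearMap.surjective hφ c
  have hconvex : Convex ℝ {x | φ x = c} := (convex_singleton c).linear_preimage φ
  have hspan : vectorSpan ℝ {x | φ x = c} ≤ LinearMap.ker φ := by
    rw [vectorSpan_def, Submodule.span_le]
    rintro _ ⟨y, hy, z, hz, rfl⟩
    simp_all
  rw [Real.Convex.dimH_eq_finrank_vectorSpan hconvex ⟨x, hx⟩, Nat.cast_lt]
  exact (Submodule.finrank_mono hspan).trans_lt
    (Submodule.finrank_lt (mt LinearMap.ker_eq_top.1 hφ))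

lemma finrank_le_dimH_range_of_eventually_leftInverse {F : Type*} [NormedAddCommGroup F]
    [NormedSpace ℝ F] {Φ : E → F} {G : F → E} {x : E}
    (hΦ : ContinuousAt Φ x) (hG : ContDiffAt ℝ 1 G (Φ x)) (hGΦ : ∀ᶠ y in 𝓝 x, G (Φ y) = y) :
    (finrank ℝ E : ENNReal) ≤ dimH (Set.range Φ) := by
  obtain ⟨K, V, hV, hGV⟩ := hG.exists_lipschitzOnWith
  have hsub : {y | Φ y ∈ V ∧ G (Φ y) = y} ⊆ G '' (Set.range Φ ∩ V) :=
    fun y ⟨hyV, hy⟩ => ⟨Φ y, ⟨⟨y, rfl⟩, hyV⟩, hy⟩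
  calc (finrank ℝ E : ENNReal)
      = dimH {y | Φ y ∈ V ∧ G (Φ y) = y} :=
        (Real.dimH_of_mem_nhds ((hΦ.eventually_mem hV).and hGΦ)).symm
    _ ≤ dimH (G '' (Set.range Φ ∩ V)) := dimH_mono hsub
    _ ≤ dimH (Set.range Φ ∩ V) := (hGV.mono Set.inter_subset_right).dimH_image_le
    _ ≤ dimH (Set.range Φ) := dimH_mono Set.inter_subset_left

lemma not_subset_biUnion_image_setOf_linearMap_eq {F S : Type*} [EMetricSpace F] {T : Set S}
    (hT : T.Countable) {Φ : S → E → F} (hΦ : ∀ s, LocallyLipschitz (Φ s)) {A : Set F}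
    (hA : (finrank ℝ E : ENNReal) ≤ dimH A) {φ : E →ₗ[ℝ] ℝ} (hφ : φ ≠ 0) (c : ℝ) :
    ¬ A ⊆ ⋃ s ∈ T, Φ s '' {x | φ x = c} := by
  intro hsub
  have himage (s : S) : dimH (Φ s '' {x | φ x = c}) ≤ dimH {x | φ x = c} :=
    dimH_image_le_of_locally_lipschitzOn fun x _ => (hΦ s).locallyLipschitzOn ‹_›
  refine (dimH_setOf_linearMap_eq_lt_finrank hφ c).not_ge ?_
  calc (finrank ℝ E : ENNReal)
      ≤ dimH (⋃ s ∈ T, Φ s '' {x | φ x = c}) := hA.trans (dimH_mono hsub)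
    _ = ⨆ s ∈ T, dimH (Φ s '' {x | φ x = c}) := dimH_bUnion hT _
    _ ≤ dimH {x | φ x = c} := iSup₂_le fun s _ => himage s

end HausdorffDimension

section LocallyLipschitz

variable {X : Type*} [PseudoEMetricSpace X]

lemma locallyLipschitz_mul {R : Type*} [NormedRing R] [NormedAlgebra ℝ R] {f g : X → R}
    (hf : LocallyLipschitz f) (hg : LocallyLipschitz g) : LocallyLipschitz fun x => f x * g x :=
  (contDiff_mul (𝕜 := ℝ) (𝔸 := R)).locallyLipschitz.comp (hf.prodMk hg)

lemma locallyLipschitz_finset_sum {ι G : Type*} [SeminormedAddCommGroup G] (s : Finset ι)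
    {f : ι → X → G} (hf : ∀ i, LocallyLipschitz (f i)) :
    LocallyLipschitz fun x => ∑ i ∈ s, f i x := by
  classical
  induction s using Finset.induction_on with
  | empty => simpa using LocallyLipschitz.const (0 : G)
  | insert i s hi ih =>
    simp only [Finset.sum_insert hi]
    exact (hf i).add ih

lemma locallyLipschitz_pi {ι : Type*} [Fintype ι] {Y : ι → Type*} [∀ i, PseudoEMetricSpace (Y i)]
    {f : X → ∀ i, Y i} (hf : ∀ i, LocallyLipschitz fun x => f x i) : LocallyLipschitz f := by
  intro x
  choose K U hU hK using fun i => hf i x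
  refine ⟨∑ i, K i, ⋂ i, U i, iInter_mem.2 hU, fun y hy z hz => edist_pi_le_iff.2 fun i => ?_⟩
  refine (hK i (Set.mem_iInter.1 hy i) (Set.mem_iInter.1 hz i)).trans ?_
  gcongr
  exact Finset.single_le_sum (fun _ _ => zero_le) (Finset.mem_univ i)

end LocallyLipschitz

section Relu

lemma relu_of_nonneg_s14 {x : ℝ} (hx : 0 ≤ x) : relu x = x := max_eq_left hx

lemma relu_of_nonpos_s14 {x : ℝ} (hx : x ≤ 0) : relu x = 0 := max_eq_right hx

lemma relu_neg (x : ℝ) : relu (-x) = relu x - x := by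
  rcases le_total 0 x with hx | hx
  · rw [relu_of_nonneg_s14 hx, relu_of_nonpos_s14 (neg_nonpos.2 hx), sub_self]
  · rw [relu_of_nonpos_s14 hx, relu_of_nonneg_s14 (neg_nonneg.2 hx), zero_sub]

lemma relu_mul_of_nonneg {c : ℝ} (hc : 0 ≤ c) (x : ℝ) : relu (c * x) = c * relu x := by
  rw [relu, relu, mul_max_of_nonneg _ _ hc, mul_zero]

lemma lipschitzWith_relu : LipschitzWith 1 relu := LipschitzWith.id.max_const 0

end Relu

section Normalization

lemma exists_relu_affine_eq (a b : ℝ) :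
    ∃ β α γ δ : ℝ, ∀ t, relu (a * t + b) = α * relu (t + β) + γ * t + δ := by
  rcases lt_trichotomy a 0 with ha | rfl | ha
  · refine ⟨b / a, -a, a, b, fun t => ?_⟩
    have hfactor : a * t + b = -(-a * (t + b / a)) := by field_simp [ha.ne]
    rw [hfactor, relu_neg, relu_mul_of_nonneg (neg_nonneg.2 ha.le)]
    linear_combination -hfactor
  · exact ⟨0, 0, 0, relu b, by simp⟩
  · refine ⟨b / a, a, 0, 0, fun t => ?_⟩
    have hfactor : a * t + b = a * (t + b / a) := by field_simp
    rw [hfactor, relu_mul_of_nonneg ha.le]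
    ring

variable {ι : Type*} [Fintype ι]

lemma exists_sum_mul_relu_affine_eq (a b : ι → ℝ) :
    ∃ β : ι → ℝ, ∀ w : ι → ℝ, ∃ (w' : ι → ℝ) (γ δ : ℝ), ∀ t,
      ∑ k, w k * relu (a k * t + b k) = ∑ k, w' k * relu (t + β k) + γ * t + δ := by
  choose β α γ δ h using fun k => exists_relu_affine_eq (a k) (b k)
  refine ⟨β, fun w => ⟨fun k => w k * α k, ∑ k, w k * γ k, ∑ k, w k * δ k, fun t => ?_⟩⟩
  rw [Finset.sum_mul, ← Finset.sum_add_distrib, ← Finset.sum_add_distrib]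
  exact Finset.sum_congr rfl fun k _ => by rw [h]; ring

lemma exists_pos_mul_sign_eq (c : ℝ) : ∃ r > 0, ∃ s, (s = -1 ∨ s = 0 ∨ s = 1) ∧ c = r * s := by
  rcases lt_trichotomy c 0 with hc | rfl | hc
  · exact ⟨-c, neg_pos.2 hc, -1, by simp, by ring⟩
  · exact ⟨1, one_pos, 0, by simp, by simp⟩
  · exact ⟨c, hc, 1, by simp, by simp⟩

lemma exists_relu_preactivation_eq (β w : ι → ℝ) (c d : ℝ) :
    ∃ (r : ℝ) (w' : ι → ℝ) (s d' : ℝ), (s = -1 ∨ s = 0 ∨ s = 1) ∧ ∀ t,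
      relu ((∑ k, w k * relu (t + β k)) + c * t + d) =
        r * relu ((∑ k, w' k * relu (t + β k)) + s * t + d') := by
  obtain ⟨r, hr, s, hs, rfl⟩ := exists_pos_mul_sign_eq c
  refine ⟨r, fun k => w k / r, s, d / r, hs, fun t => ?_⟩
  rw [← relu_mul_of_nonneg hr.le]
  simp only [mul_add, Finset.mul_sum]
  field_simp

theorem IsReLU2.exists_nParams2 {n1 n2 : ℕ} {f : ℝ → ℝ} (hf : IsReLU2 n1 n2 f) :
    ∃ p : NParams2 n1 n2, p.valid ∧ ∀ t, f t = p.fn t := by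
  obtain ⟨a1, b1, a2, c2, b2, a3, c3, b3, hf⟩ := hf
  obtain ⟨β, hβ⟩ := exists_sum_mul_relu_affine_eq a1 b1
  choose w γ δ hw using fun j => hβ (a2 j)
  choose r w' s d' hs hr using fun j =>
    exists_relu_preactivation_eq β (w j) (γ j + c2 j) (δ j + b2 j)
  refine ⟨⟨c3, b3, fun j => a3 j * r j, w', β, d', s⟩, hs, fun t => ?_⟩
  rw [hf t, NParams2.fn]
  congr 1
  refine Finset.sum_congr rfl fun j _ => ?_
  rw [mul_assoc, ← hr, hw]
  congr 2
  ring

lemma NParams2.isReLU2_fn {n1 n2 : ℕ} (p : NParams2 n1 n2) : IsReLU2 n1 n2 p.fn :=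
  ⟨fun _ => 1, p.b1, p.a2, p.s, p.b2, p.a3, p.c3, p.b3, fun t => by simp [NParams2.fn]⟩

end Normalization

section ActivationPattern

lemma partialSum_eq_sum_ite {M : Type*} [AddCommMonoid M] {n : ℕ} (f : Fin n → M)
    (m : Fin (n + 1)) : Fin.partialSum f m = ∑ k, if k.castSucc < m then f k else 0 := by
  induction n with
  | zero => simp [Fin.eq_zero m]
  | succ n ih =>
    cases m using Fin.cases with
    | zero => simp
    | succ j => simp [Fin.partialSum_succ', Fin.sum_univ_succ, ih, Fin.tail,
      Fin.castSucc_lt_iff_succ_le]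

lemma partialSum_mul_add {R : Type*} [CommSemiring R] {n : ℕ} (f g : Fin n → R) (t : R)
    (m : Fin (n + 1)) :
    Fin.partialSum (fun k => f k * t + g k) m =
      Fin.partialSum f m * t + Fin.partialSum g m := by
  induction m using Fin.induction with
  | zero => simp
  | succ j ih => simp only [Fin.partialSum_succ, ih]; ring

/-- The entries of `u` with index below the cut `m` are positive and all others are negative: when
`u` lists the pre-activations of a layer, exactly its first `m` neurons are active. -/
def IsCutAt {n : ℕ} (u : Fin n → ℝ) (m : Fin (n + 1)) : Prop :=
  ∀ k, if k.castSucc < m then 0 < u k else u k < 0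

variable {n : ℕ}

lemma IsCutAt.sum_mul_relu {u : Fin n → ℝ} {m : Fin (n + 1)} (hu : IsCutAt u m) (a : Fin n → ℝ) :
    ∑ k, a k * relu (u k) = Fin.partialSum (fun k => a k * u k) m := by
  rw [partialSum_eq_sum_ite]
  refine Finset.sum_congr rfl fun k _ => ?_
  have huk := hu k
  split_ifs at huk ⊢
  · rw [relu_of_nonneg_s14 huk.le]
  · rw [relu_of_nonpos_s14 huk.le, mul_zero]

lemma isOpen_setOf_isCutAt (m : Fin (n + 1)) : IsOpen {u : Fin n → ℝ | IsCutAt u m} := by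
  simp only [IsCutAt, Set.ofPred_forall]
  refine isOpen_iInter_of_finite fun k => ?_
  split_ifs
  · exact isOpen_lt continuous_const (continuous_apply k)
  · exact isOpen_lt (continuous_apply k) continuous_const

end ActivationPattern

section ParameterIndex

variable {n1 n2 : ℕ}

instance : Finite (PIdx2 n1 n2) := by
  let enumerate : Bool ⊕ (Fin n2 ⊕ Fin n2) ⊕ Fin n1 ⊕ (Fin n2 × Fin n1) → PIdx2 n1 n2
    | .inl false => .c3
    | .inl true => .b3
    | .inr (.inl (.inl j)) => .a3 j
    | .inr (.inl (.inr j)) => .b2 j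
    | .inr (.inr (.inl k)) => .b1 k
    | .inr (.inr (.inr (j, k))) => .a2 j k
  refine .of_surjective enumerate ?_
  rintro (_ | _ | j | ⟨j, k⟩ | k | j)
  exacts [⟨.inl false, rfl⟩, ⟨.inl true, rfl⟩, ⟨.inr (.inl (.inl j)), rfl⟩,
    ⟨.inr (.inr (.inr (j, k))), rfl⟩, ⟨.inr (.inr (.inl k)), rfl⟩, ⟨.inr (.inl (.inr j)), rfl⟩]

noncomputable instance : Fintype (PIdx2 n1 n2) := Fintype.ofFinite _

end ParameterIndex

namespace NParams2

variable {n1 n2 : ℕ}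

section AffinePieces

variable (p : NParams2 n1 n2)

/-- The pre-activation of the `j`-th neuron of the second hidden layer, as a function of the
input `t`. -/
noncomputable def preactivation (j : Fin n2) (t : ℝ) : ℝ :=
  (∑ k, p.a2 j k * relu (t + p.b1 k)) + p.s j * t + p.b2 j

/-- The slope of the `j`-th second-layer pre-activation where exactly the first `m` neurons of the
first layer are active. -/
noncomputable def slope (m : Fin (n1 + 1)) (j : Fin n2) : ℝ :=
  p.s j + Fin.partialSum (p.a2 j) m

/-- The intercept of the `j`-th second-layer pre-activation where exactly the first `m` neurons of
the first layer are active. -/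
noncomputable def intercept (m : Fin (n1 + 1)) (j : Fin n2) : ℝ :=
  p.b2 j + Fin.partialSum (fun k => p.a2 j k * p.b1 k) m

/-- At the input `t`, the active neurons are the first `m` of the first layer and the first `l` of
the second layer. -/
structure HasPattern (m : Fin (n1 + 1)) (l : Fin (n2 + 1)) (t : ℝ) : Prop where
  first : IsCutAt (fun k => t + p.b1 k) m
  second : IsCutAt (fun j => p.preactivation j t) l

variable {p} {m : Fin (n1 + 1)} {l : Fin (n2 + 1)} {t : ℝ}

lemma preactivation_eq (h : IsCutAt (fun k => t + p.b1 k) m) (j : Fin n2) :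
    p.preactivation j t = p.slope m j * t + p.intercept m j := by
  simp only [preactivation, h.sum_mul_relu, mul_add, partialSum_mul_add, slope, intercept]
  ring

lemma HasPattern.fn_eq (h : p.HasPattern m l t) :
    p.fn t = (p.c3 + Fin.partialSum (fun j => p.a3 j * p.slope m j) l) * t +
      (p.b3 + Fin.partialSum (fun j => p.a3 j * p.intercept m j) l) := by
  have hsum : ∑ j, p.a3 j * relu (p.preactivation j t) =
      Fin.partialSum (fun j => p.a3 j * p.slope m j * t + p.a3 j * p.intercept m j) l := by
    rw [h.second.sum_mul_relu]
    simp only [preactivation_eq h.first, mul_add, mul_assoc]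
  calc p.fn t = p.c3 * t + p.b3 + ∑ j, p.a3 j * relu (p.preactivation j t) := rfl
    _ = _ := by rw [hsum, partialSum_mul_add]; ring

end AffinePieces

section Decoding

/-- Slope and intercept of the line through the points of the graph of `f` over `t` and `t + 1`. -/
def secant (f : ℝ → ℝ) (t : ℝ) : ℝ × ℝ :=
  (f (t + 1) - f t, f t - (f (t + 1) - f t) * t)

/-- The table of secants of `f` at the nodes `τ m l`. -/
def secants (τ : Fin (n1 + 1) → Fin (n2 + 1) → ℝ) (f : ℝ → ℝ) :
    Fin (n1 + 1) → Fin (n2 + 1) → ℝ × ℝ :=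
  fun m l => secant f (τ m l)

/-- The nodes `τ` resolve `p` if the unit interval to the right of `τ m l` has its endpoints in the
piece on which the first `m` and the first `l` neurons of the two layers are active. -/
def Resolves (τ : Fin (n1 + 1) → Fin (n2 + 1) → ℝ) (p : NParams2 n1 n2) : Prop :=
  ∀ m l, p.HasPattern m l (τ m l) ∧ p.HasPattern m l (τ m l + 1)

/-- The change of slope and intercept when the `j`-th neuron of the second layer becomes active
while exactly the first `m` neurons of the first layer are. -/
def jump (z : Fin (n1 + 1) → Fin (n2 + 1) → ℝ × ℝ) (m : Fin (n1 + 1)) (j : Fin n2) : ℝ × ℝ :=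
  z m j.succ - z m j.castSucc

/-- The parameters (with sign vector `s = 1`) read off from a table `z` of slopes and intercepts.
It divides by the parameters `a³` and by the products `a³ a²` in row `0`; where one of these
vanishes the value is meaningless. -/
noncomputable def decode [NeZero n2] (z : Fin (n1 + 1) → Fin (n2 + 1) → ℝ × ℝ) :
    PIdx2 n1 n2 → ℝ
  | .c3 => (z 0 0).1
  | .b3 => (z 0 0).2
  | .a3 j => (jump z 0 j).1
  | .b2 j => (jump z 0 j).2 / (jump z 0 j).1
  | .a2 j k => ((jump z k.succ j).1 - (jump z k.castSucc j).1) / (jump z 0 j).1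
  | .b1 k => ((jump z k.succ 0).2 - (jump z k.castSucc 0).2) /
      ((jump z k.succ 0).1 - (jump z k.castSucc 0).1)

variable {p : NParams2 n1 n2} {τ : Fin (n1 + 1) → Fin (n2 + 1) → ℝ}

lemma Resolves.secants_fn (h : p.Resolves τ) (m : Fin (n1 + 1)) (l : Fin (n2 + 1)) :
    secants τ p.fn m l = (p.c3 + Fin.partialSum (fun j => p.a3 j * p.slope m j) l,
      p.b3 + Fin.partialSum (fun j => p.a3 j * p.intercept m j) l) := by
  ext <;> simp only [secants, secant, (h m l).1.fn_eq, (h m l).2.fn_eq] <;> ring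

lemma Resolves.jump_secants_fn (h : p.Resolves τ) (m : Fin (n1 + 1)) (j : Fin n2) :
    jump (secants τ p.fn) m j = (p.a3 j * p.slope m j, p.a3 j * p.intercept m j) := by
  simp [jump, h.secants_fn, Fin.partialSum_succ]

lemma slope_succ_sub_slope_castSucc (j : Fin n2) (k : Fin n1) :
    p.slope k.succ j - p.slope k.castSucc j = p.a2 j k := by
  simp [slope, Fin.partialSum_succ]

lemma intercept_succ_sub_intercept_castSucc (j : Fin n2) (k : Fin n1) :
    p.intercept k.succ j - p.intercept k.castSucc j = p.a2 j k * p.b1 k := by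
  simp [intercept, Fin.partialSum_succ]

variable [NeZero n2]

lemma Resolves.decode_secants_fn (h : p.Resolves τ) (hs : p.s = 1) (ha3 : ∀ j, p.a3 j ≠ 0)
    (ha2 : ∀ k, p.a2 0 k ≠ 0) : decode (secants τ p.fn) = p.get := by
  have hslope (j : Fin n2) : p.slope 0 j = 1 := by simp [slope, hs]
  have hintercept (j : Fin n2) : p.intercept 0 j = p.b2 j := by simp [intercept]
  ext i
  cases i with
  | c3 => simp [decode, get, h.secants_fn]
  | b3 => simp [decode, get, h.secants_fn]
  | a3 j => simp [decode, get, h.jump_secants_fn, hslope]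
  | b2 j => simp [decode, get, h.jump_secants_fn, hslope, hintercept, ha3]
  | a2 j k =>
    simp [decode, get, h.jump_secants_fn, hslope, ← mul_sub, slope_succ_sub_slope_castSucc, ha3]
  | b1 k =>
    simp [decode, get, h.jump_secants_fn, ← mul_sub, slope_succ_sub_slope_castSucc,
      intercept_succ_sub_intercept_castSucc, mul_div_mul_left, mul_div_cancel_left₀, ha3, ha2]

lemma contDiffAt_decode {z : Fin (n1 + 1) → Fin (n2 + 1) → ℝ × ℝ} {r : WithTop ℕ∞}
    (hjump : ∀ j, (jump z 0 j).1 ≠ 0)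
    (hsub : ∀ k : Fin n1, (jump z k.succ 0).1 - (jump z k.castSucc 0).1 ≠ 0) :
    ContDiffAt ℝ r (decode (n1 := n1) (n2 := n2)) z := by
  rw [contDiffAt_pi]
  rintro (_ | _ | j | ⟨j, k⟩ | k | j) <;> simp only [decode, jump] <;>
    fun_prop (disch := first | exact hjump _ | exact hsub _)

lemma Resolves.contDiffAt_decode_secants_fn (h : p.Resolves τ) (hs : p.s = 1)
    (ha3 : ∀ j, p.a3 j ≠ 0) (ha2 : ∀ k, p.a2 0 k ≠ 0) {r : WithTop ℕ∞} :
    ContDiffAt ℝ r (decode (n1 := n1) (n2 := n2)) (secants τ p.fn) :=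
  contDiffAt_decode (fun j => by simp [h.jump_secants_fn, slope, hs, ha3])
    fun k => by simp [h.jump_secants_fn, ← mul_sub, slope_succ_sub_slope_castSucc, ha3, ha2]

end Decoding

section ParameterSpace

/-- The normalized parameters with sign vector `s` and real parameters `θ`. It identifies the real
parameters with the normed space `PIdx2 n1 n2 → ℝ`. -/
def ofVector (s : Fin n2 → ℝ) (θ : PIdx2 n1 n2 → ℝ) : NParams2 n1 n2 :=
  ⟨θ .c3, θ .b3, fun j => θ (.a3 j), fun j k => θ (.a2 j k), fun k => θ (.b1 k), fun j => θ (.b2 j),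
    s⟩

lemma get_ofVector (s : Fin n2 → ℝ) (θ : PIdx2 n1 n2 → ℝ) : (ofVector s θ).get = θ := by
  ext (_ | _ | _ | _ | _ | _) <;> rfl

lemma locallyLipschitz_preactivation_ofVector (s : Fin n2 → ℝ) (j : Fin n2) (t : ℝ) :
    LocallyLipschitz fun θ : PIdx2 n1 n2 → ℝ => (ofVector s θ).preactivation j t := by
  have hθ (i : PIdx2 n1 n2) : LocallyLipschitz fun θ : PIdx2 n1 n2 → ℝ => θ i :=
    (LipschitzWith.eval i).locallyLipschitz
  have hfirst (k : Fin n1) :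
      LocallyLipschitz fun θ : PIdx2 n1 n2 → ℝ => relu (t + θ (.b1 k)) :=
    lipschitzWith_relu.locallyLipschitz.comp ((LocallyLipschitz.const t).add (hθ _))
  exact ((locallyLipschitz_finset_sum _ fun k => locallyLipschitz_mul (hθ (.a2 j k)) (hfirst k)).add
    (LocallyLipschitz.const (s j * t))).add (hθ (.b2 j))

lemma locallyLipschitz_fn_ofVector (s : Fin n2 → ℝ) (t : ℝ) :
    LocallyLipschitz fun θ : PIdx2 n1 n2 → ℝ => (ofVector s θ).fn t := by
  have hθ (i : PIdx2 n1 n2) : LocallyLipschitz fun θ : PIdx2 n1 n2 → ℝ => θ i :=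
    (LipschitzWith.eval i).locallyLipschitz
  exact ((locallyLipschitz_mul (hθ .c3) (LocallyLipschitz.const t)).add (hθ .b3)).add
    (locallyLipschitz_finset_sum _ fun j => locallyLipschitz_mul (hθ (.a3 j))
      (lipschitzWith_relu.locallyLipschitz.comp (locallyLipschitz_preactivation_ofVector s j t)))

lemma locallyLipschitz_secants_ofVector (τ : Fin (n1 + 1) → Fin (n2 + 1) → ℝ) (s : Fin n2 → ℝ) :
    LocallyLipschitz fun θ : PIdx2 n1 n2 → ℝ => secants τ (ofVector s θ).fn := by
  refine locallyLipschitz_pi fun m => locallyLipschitz_pi fun l => ?_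
  have hvalue := locallyLipschitz_fn_ofVector (n1 := n1) s
  have hslope := (hvalue (τ m l + 1)).sub (hvalue (τ m l))
  exact hslope.prodMk
    ((hvalue (τ m l)).sub (locallyLipschitz_mul hslope (LocallyLipschitz.const (τ m l))))

lemma eventually_hasPattern_ofVector {s : Fin n2 → ℝ} {θ₀ : PIdx2 n1 n2 → ℝ} {m : Fin (n1 + 1)}
    {l : Fin (n2 + 1)} {t : ℝ} (h : (ofVector s θ₀).HasPattern m l t) :
    ∀ᶠ θ in 𝓝 θ₀, (ofVector s θ).HasPattern m l t := by
  have hfirst : Continuous fun (θ : PIdx2 n1 n2 → ℝ) k => t + (ofVector s θ).b1 k := by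
    simp only [ofVector]
    fun_prop
  have hsecond : Continuous fun (θ : PIdx2 n1 n2 → ℝ) j => (ofVector s θ).preactivation j t :=
    continuous_pi fun j => (locallyLipschitz_preactivation_ofVector s j t).continuous
  filter_upwards [hfirst.continuousAt.eventually_mem ((isOpen_setOf_isCutAt m).mem_nhds h.first),
    hsecond.continuousAt.eventually_mem ((isOpen_setOf_isCutAt l).mem_nhds h.second)]
    with θ h₁ h₂ using ⟨h₁, h₂⟩

lemma Resolves.eventually_ofVector {τ : Fin (n1 + 1) → Fin (n2 + 1) → ℝ} {s : Fin n2 → ℝ}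
    {θ₀ : PIdx2 n1 n2 → ℝ} (h : (ofVector s θ₀).Resolves τ) :
    ∀ᶠ θ in 𝓝 θ₀, (ofVector s θ).Resolves τ :=
  eventually_all.2 fun m => eventually_all.2 fun l =>
    (eventually_hasPattern_ofVector (h m l).1).and (eventually_hasPattern_ofVector (h m l).2)

theorem Resolves.card_le_dimH_range_secants [NeZero n2] {p : NParams2 n1 n2}
    {τ : Fin (n1 + 1) → Fin (n2 + 1) → ℝ} (h : p.Resolves τ) (hs : p.s = 1)
    (ha3 : ∀ j, p.a3 j ≠ 0) (ha2 : ∀ k, p.a2 0 k ≠ 0) :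
    (finrank ℝ (PIdx2 n1 n2 → ℝ) : ENNReal) ≤
      dimH (Set.range fun θ : PIdx2 n1 n2 → ℝ => secants τ (ofVector p.s θ).fn) := by
  have hne (i : PIdx2 n1 n2) (hi : p.get i ≠ 0) : ∀ᶠ θ in 𝓝 p.get, θ i ≠ 0 :=
    (continuous_apply i).continuousAt.eventually_ne hi
  refine finrank_le_dimH_range_of_eventually_leftInverse (G := decode) (x := p.get)
    (Φ := fun θ => secants τ (ofVector p.s θ).fn)
    (locallyLipschitz_secants_ofVector τ p.s).continuous.continuousAt
    (h.contDiffAt_decode_secants_fn hs ha3 ha2) ?_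
  filter_upwards [h.eventually_ofVector, eventually_all.2 fun j => hne (.a3 j) (ha3 j),
    eventually_all.2 fun k => hne (.a2 0 k) (ha2 k)] with θ hθ hθ3 hθ2
  rw [hθ.decode_secants_fn hs hθ3 hθ2, get_ofVector]

end ParameterSpace

section Zigzag

/-- The half-width of one segment of the zigzag, chosen to accommodate `n2` activation thresholds at
distance `2` from each other. -/
def halfWidth (n2 : ℕ) : ℝ := 2 * n2 + 2

variable (n1 n2) in
/-- Parameters for which the `j`-th second-layer pre-activation is the zigzag `z(t) - 2j`, where `z`
has the breakpoints `(2k+1)D` and equals `(-1)^m (t - 2mD)` on its `m`-th segment, for `D` the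
half-width. -/
noncomputable def zigzag : NParams2 n1 n2 where
  c3 := 0
  b3 := 0
  a3 _ := 1
  a2 _ k := -2 * (-1) ^ (k : ℕ)
  b1 k := -((2 * k + 1) * halfWidth n2)
  b2 j := -2 * j
  s := 1

/-- The input at which `z(t) = 2l - 1` on the `m`-th segment of the zigzag, halfway between two
activation thresholds, moved to the left by half a unit so that the unit interval starting there is
centred. -/
noncomputable def zigzagNode (m : Fin (n1 + 1)) (l : Fin (n2 + 1)) : ℝ :=
  2 * m * halfWidth n2 + (-1) ^ (m : ℕ) * (2 * l - 1) - 1 / 2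

lemma slope_zigzag (m : Fin (n1 + 1)) (j : Fin n2) :
    (zigzag n1 n2).slope m j = (-1) ^ (m : ℕ) := by
  induction m using Fin.induction with
  | zero => simp [slope, zigzag]
  | succ k ih =>
    rw [← sub_add_cancel (slope _ k.succ j) (slope _ k.castSucc j),
      slope_succ_sub_slope_castSucc, ih]
    simp [zigzag, pow_succ]
    ring

lemma intercept_zigzag (m : Fin (n1 + 1)) (j : Fin n2) :
    (zigzag n1 n2).intercept m j = -((-1) ^ (m : ℕ) * (2 * m * halfWidth n2)) - 2 * j := by
  induction m using Fin.induction with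
  | zero => simp [intercept, zigzag]
  | succ k ih =>
    rw [← sub_add_cancel (intercept _ k.succ j) (intercept _ k.castSucc j),
      intercept_succ_sub_intercept_castSucc, ih]
    simp [zigzag, pow_succ]
    ring

lemma isCutAt_first_zigzag {m : Fin (n1 + 1)} {t : ℝ}
    (ht : |t - 2 * m * halfWidth n2| < halfWidth n2) :
    IsCutAt (fun k => t + (zigzag n1 n2).b1 k) m := by
  have hwidth : 0 < halfWidth n2 := (abs_nonneg _).trans_lt ht
  rw [abs_lt] at ht
  intro k
  simp only [zigzag]
  split_ifs with hk
  · have hkm : (k : ℝ) + 1 ≤ m := by exact_mod_cast hk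
    nlinarith
  · have hmk : (m : ℝ) ≤ k := by exact_mod_cast not_lt.1 hk
    nlinarith

lemma hasPattern_zigzag {m : Fin (n1 + 1)} {l : Fin (n2 + 1)} {t : ℝ}
    (ht : |t - (2 * m * halfWidth n2 + (-1) ^ (m : ℕ) * (2 * l - 1))| < 1) :
    (zigzag n1 n2).HasPattern m l t := by
  set height := (-1) ^ (m : ℕ) * (t - 2 * m * halfWidth n2) with hheight
  have hsq : ((-1 : ℝ) ^ (m : ℕ)) * (-1) ^ (m : ℕ) = 1 := by rw [← mul_pow]; simp
  have habs (x : ℝ) : |(-1) ^ (m : ℕ) * x| = |x| := by simp [abs_mul]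
  have hclose : |height - (2 * l - 1)| < 1 := by
    rw [← habs] at ht
    convert ht using 2
    linear_combination (2 * l - 1 : ℝ) * hsq
  have hl : (l : ℝ) ≤ n2 := by exact_mod_cast l.is_le
  have hl0 : (0 : ℝ) ≤ l := by positivity
  rw [abs_lt] at hclose
  have hfirst : IsCutAt (fun k => t + (zigzag n1 n2).b1 k) m := by
    refine isCutAt_first_zigzag ?_
    rw [← habs, ← hheight, abs_lt, halfWidth]
    constructor <;> linarith
  refine ⟨hfirst, fun j => ?_⟩
  have hpreactivation : (zigzag n1 n2).preactivation j t = height - 2 * j := by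
    rw [preactivation_eq hfirst, slope_zigzag, intercept_zigzag]
    ring
  simp only [hpreactivation]
  split_ifs with hj
  · have hjl : (j : ℝ) + 1 ≤ l := by exact_mod_cast hj
    linarith
  · have hlj : (l : ℝ) ≤ j := by exact_mod_cast not_lt.1 hj
    linarith

lemma resolves_zigzag : (zigzag n1 n2).Resolves zigzagNode := fun m l => by
  constructor <;> refine hasPattern_zigzag ?_ <;> rw [zigzagNode, abs_lt] <;>
    constructor <;> linarith

end Zigzag

lemma finite_setOf_sign (n : ℕ) :
    {s : Fin n → ℝ | ∀ j, s j = -1 ∨ s j = 0 ∨ s j = 1}.Finite :=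
  Set.Finite.pi' fun _ => ({-1, 0, 1} : Set ℝ).toFinite

theorem exists_fn_ne_of_get_eq [NeZero n2] (i : PIdx2 n1 n2) (v : ℝ) :
    ∃ q : NParams2 n1 n2, ∀ p : NParams2 n1 n2, p.valid → p.get i = v → q.fn ≠ p.fn := by
  by_contra! hall
  have hproj : (LinearMap.proj i : (PIdx2 n1 n2 → ℝ) →ₗ[ℝ] ℝ) ≠ 0 :=
    fun h => one_ne_zero (LinearMap.congr_fun h 1)
  have hdim := resolves_zigzag.card_le_dimH_range_secants (p := zigzag n1 n2) rfl
    (by simp [zigzag]) (by simp [zigzag])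
  refine not_subset_biUnion_image_setOf_linearMap_eq (finite_setOf_sign n2).countable
    (locallyLipschitz_secants_ofVector zigzagNode) hdim hproj v ?_
  rintro _ ⟨θ, rfl⟩
  obtain ⟨p, hp, hpi, hfn⟩ := hall (ofVector (zigzag n1 n2).s θ)
  exact Set.mem_biUnion hp ⟨p.get, hpi, congrArg (secants zigzagNode) hfn.symm⟩

end NParams2

theorem two_layer_parameter_independence_general (n1 n2 : ℕ) (hn2 : 1 ≤ n2) :
    (∀ f : ℝ → ℝ, IsReLU2 n1 n2 f →
      ∃ p : NParams2 n1 n2, p.valid ∧ ∀ t, f t = p.fn t) ∧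
    (∀ p : NParams2 n1 n2, p.valid → IsReLU2 n1 n2 p.fn) ∧
    (∀ (i : PIdx2 n1 n2) (v : ℝ),
      {f : ℝ → ℝ | ∃ p : NParams2 n1 n2, p.valid ∧ p.get i = v ∧ ∀ t, f t = p.fn t}
        ⊂ {f : ℝ → ℝ | IsReLU2 n1 n2 f}) := by
  have : NeZero n2 := ⟨by lia⟩
  refine ⟨fun f hf => hf.exists_nParams2, fun p _ => p.isReLU2_fn, fun i v => ?_⟩
  obtain ⟨q, hq⟩ := NParams2.exists_fn_ne_of_get_eq i v
  refine (Set.ssubset_iff_of_subset ?_).2 ⟨q.fn, q.isReLU2_fn, ?_⟩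
  · rintro f ⟨p, -, -, hf⟩
    exact funext hf ▸ p.isReLU2_fn
  · rintro ⟨p, hp, hpi, hf⟩
    exact hq p hp hpi (funext hf)

/-- (i) the normalized model equals `Y_{n₁,n₂}`, and (ii) its real
parameters are independent: fixing any one of them to any a priori constant value
yields a proper subclass of `Y_{n₁,n₂}`. -/
theorem two_layer_parameter_independence (n1 n2 : ℕ) (hn1 : 1 ≤ n1) (hn2 : 2 ≤ n2) :
    (∀ f : ℝ → ℝ, IsReLU2 n1 n2 f →
      ∃ p : NParams2 n1 n2, p.valid ∧ ∀ t, f t = p.fn t) ∧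
    (∀ p : NParams2 n1 n2, p.valid → IsReLU2 n1 n2 p.fn) ∧
    (∀ (i : PIdx2 n1 n2) (v : ℝ),
      {f : ℝ → ℝ | ∃ p : NParams2 n1 n2, p.valid ∧ p.get i = v ∧ ∀ t, f t = p.fn t}
        ⊂ {f : ℝ → ℝ | IsReLU2 n1 n2 f}) := by
  exact two_layer_parameter_independence_general n1 n2 (by lia)
end
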